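/- For every ε > 0 there exists N such that for every even integer n ≥ N there exists a 2-coloring c of Z_n with M_4(n,c) ≤ (8543/72600 + ε)·n². -/

import Mathlib

/-- Number of monochromatic `k`-APs in `Z_n` under the 2-coloring `c`:
pairs `(a,d)` with `c a = c (a+d) = ⋯ = c (a+(k-1)d)`. -/
noncomputable def monoAPCount (n k : ℕ) (c : ZMod n → Fin 2) : ℕ :=
  Set.ncard {p : ZMod n × ZMod n | ∀ i < k, c (p.1 + i • p.2) = c p.1}

/-!
Cut `Z_n` into `b` blocks of equal length `L` and color each block with one color. Parametrize a
4-AP by its two middle terms `x` and `y`, so that its outer terms are `2 * x - y` and `2 * y - x`.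
If `x` and `y` lie in the blocks `i` and `e` at the offsets `ξ` and `η`, then the outer terms lie in
the blocks `2 * i - e + j` and `2 * e - i + k`, where the carries `j = ⌊(2 * ξ - η) / L⌋` and
`k = ⌊(2 * η - ξ) / L⌋` depend only on the offsets. Both carries vanish on a third of the pairs of
offsets. Hence if at most `B` pairs `(i, e)` give monochromatic progressions for the carries
`(0, 0)` and at most `A` do for every other pair of carries, then the density of monochromatic
4-APs is at most `(2 * A + B) / (3 * b ^ 2)`, up to an error that tends to `0`, caused by the
blocks not quite filling `Z_n`. A pattern with `b = 20`, `A = 50` and `B = 36` gives the density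
`17 / 150`.
-/

lemma ediv_eq_of_emod_interior {L b z q w : ℤ} (hz : z = L * q + w) (hw : -b < w)
    (hw' : w < L + b) (hlow : b ≤ z % L) (hhigh : z % L + b ≤ L) : z / L = q := by
  have hdiv := Int.mul_ediv_add_emod z L
  have hL : 0 ≤ L := by omega
  have hupper : z / L < q + 1 := lt_of_mul_lt_mul_left (a := L) (by linarith) hL
  have hlower : q < z / L + 1 := lt_of_mul_lt_mul_left (a := L) (by linarith) hL
  omega

section Carries

/-- The quotient of `2 * ξ - η` by `L`, rounded down: the number of blocks of length `L` by which
`2 * x - y` lies beyond the block predicted from the blocks of `x` and `y`, when `x` and `y` have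
the offsets `ξ` and `η` in their blocks. -/
def carry (L ξ η : ℕ) : ℤ := (2 * ξ - η : ℤ) / L

lemma carry_mem_Icc {L ξ η : ℕ} (hξ : ξ < L) (hη : η < L) : carry L ξ η ∈ Finset.Icc (-1) 1 := by
  have hL : (0 : ℤ) < L := by omega
  rw [Finset.mem_Icc, carry, Int.le_ediv_iff_mul_le hL, ← Int.lt_add_one_iff (b := 1),
    Int.ediv_lt_iff_lt_mul hL]
  omega

/-- The pairs of offsets in blocks of length `L` for which both carries vanish. -/
def zeroCarryPairs (L : ℕ) : Finset (ℕ × ℕ) :=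
  (Finset.range L ×ˢ Finset.range L).filter fun p => carry L p.1 p.2 = 0 ∧ carry L p.2 p.1 = 0

-- The pairs `(2 * ξ - η, 2 * η - ξ)` form the lattice of index 3 of all `(p, q)` with
-- `p ≡ q [MOD 3]`; the injection below sends `(p, t)` to the offsets with `q = 3 * t + p % 3`.
lemma le_card_zeroCarryPairs (L : ℕ) : L * (L / 3) ≤ (zeroCarryPairs L).card := by
  suffices (Finset.range L ×ˢ Finset.range (L / 3)).card ≤ (zeroCarryPairs L).card by simpa
  refine Finset.card_le_card_of_injOn
    (fun p => (p.1 - p.1 / 3 + p.2, p.1 / 3 + p.1 % 3 + 2 * p.2)) ?_ ?_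
  · rintro ⟨p, t⟩ hpt
    obtain ⟨hp, ht⟩ := Finset.mem_product.1 hpt
    rw [Finset.mem_range] at hp ht
    dsimp only at hp ht ⊢
    refine Finset.mem_filter.2 ⟨Finset.mem_product.2 ⟨?_, ?_⟩, ?_, ?_⟩
    · exact Finset.mem_range.2 (by omega)
    · exact Finset.mem_range.2 (by omega)
    · exact Int.ediv_eq_zero_of_lt (by omega) (by omega)
    · exact Int.ediv_eq_zero_of_lt (by omega) (by omega)
  · rintro ⟨p, t⟩ - ⟨p', t'⟩ - h
    simp only [Prod.mk.injEq] at h ⊢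
    omega

lemma three_mul_sum_carry_le {L A : ℕ} {g : ℤ → ℤ → ℕ}
    (hA : ∀ j ∈ Finset.Icc (-1) 1, ∀ k ∈ Finset.Icc (-1) 1, g j k ≤ A) :
    3 * ∑ p ∈ Finset.range L ×ˢ Finset.range L, g (carry L p.1 p.2) (carry L p.2 p.1) ≤
      (2 * A + g 0 0) * L ^ 2 + 2 * A * L := by
  have hzero : g 0 0 ≤ A := hA 0 (by simp) 0 (by simp)
  have hsum : ∑ p ∈ Finset.range L ×ˢ Finset.range L, g (carry L p.1 p.2) (carry L p.2 p.1) +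
      (zeroCarryPairs L).card * (A - g 0 0) ≤ A * L ^ 2 := by
    rw [zeroCarryPairs, Finset.card_filter, Finset.sum_mul, ← Finset.sum_add_distrib]
    refine (Finset.sum_le_card_nsmul _ _ A fun p hp => ?_).trans_eq ?_
    · rw [Finset.mem_product, Finset.mem_range, Finset.mem_range] at hp
      have hgA := hA _ (carry_mem_Icc hp.1 hp.2) _ (carry_mem_Icc hp.2 hp.1)
      split_ifs with h
      · rw [h.1, h.2]
        omega
      · omega
    · simp only [Finset.card_product, Finset.card_range, smul_eq_mul]
      ring
  have hL : L ^ 2 ≤ 3 * (zeroCarryPairs L).card + 2 * L := by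
    nlinarith [le_card_zeroCarryPairs L, show L ≤ 3 * (L / 3) + 2 by omega]
  obtain ⟨D, hD⟩ := Nat.exists_eq_add_of_le hzero
  rw [hD, Nat.add_sub_cancel_left] at hsum
  rw [hD]
  nlinarith [Nat.mul_le_mul_right D hL]

end Carries

section Blocks

variable {n : ℕ} (b : ℕ)

/-- The index of the block containing `x` when `Z_n` is cut into `b` blocks of length `n / b`,
the fewer than `b` remaining elements continuing the numbering cyclically. -/
def block (x : ZMod n) : ZMod b := (x.val / (n / b) : ℕ)

/-- The position of `x` within its block. -/
def offset (x : ZMod n) : ℕ := x.val % (n / b)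

/-- `x` is at distance at least `b` from the ends of its block. As the remaining elements shift
positions by less than `b` upon reduction modulo `n`, this keeps the block stable under wrapping
around `Z_n`. -/
def IsBlockInterior (x : ZMod n) : Prop := b ≤ offset b x ∧ offset b x + b ≤ n / b

variable {b}

lemma eq_of_val_div_eq_of_offset_eq [NeZero n] {x y : ZMod n}
    (hdiv : x.val / (n / b) = y.val / (n / b)) (hoffset : offset b x = offset b y) : x = y := by
  refine ZMod.val_injective n ?_
  rw [← Nat.div_add_mod x.val (n / b), ← Nat.div_add_mod y.val (n / b), hdiv]
  exact congrArg _ hoffset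

lemma IsBlockInterior.val_div_lt [NeZero b] [NeZero n] {x : ZMod n}
    (hx : IsBlockInterior b x) : x.val / (n / b) < b := by
  by_contra! h
  have hblocks := Nat.mul_le_mul_left (n / b) h
  have hdiv := Nat.div_add_mod x.val (n / b)
  have hn := Nat.div_add_mod' n b
  have hmod := Nat.mod_lt n (Nat.pos_of_neZero b)
  have hlt := x.val_lt
  have hoff : b ≤ x.val % (n / b) := hx.1
  omega

lemma IsBlockInterior.ext [NeZero b] [NeZero n] {x y : ZMod n} (hx : IsBlockInterior b x)
    (hy : IsBlockInterior b y) (hblock : block b x = block b y)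
    (hoffset : offset b x = offset b y) : x = y := by
  refine eq_of_val_div_eq_of_offset_eq ?_ hoffset
  have h := (ZMod.natCast_eq_natCast_iff' _ _ _).1 hblock
  rwa [Nat.mod_eq_of_lt hx.val_div_lt, Nat.mod_eq_of_lt hy.val_div_lt] at h

lemma exists_val_two_mul_sub [NeZero n] (x y : ZMod n) :
    ∃ m ∈ Finset.Icc (-1 : ℤ) 1, ((2 * x - y).val : ℤ) = 2 * x.val - y.val + n * m := by
  have hcast : ((((2 * x - y).val : ℤ) - (2 * x.val - y.val) : ℤ) : ZMod n) = 0 := by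
    simp
  obtain ⟨m, hm⟩ := (ZMod.intCast_zmod_eq_zero_iff_dvd _ _).1 hcast
  have hx := x.val_lt
  have hy := y.val_lt
  have hz := (2 * x - y).val_lt
  refine ⟨m, Finset.mem_Icc.2 ⟨?_, ?_⟩, by linarith⟩
  · by_contra! h
    nlinarith
  · by_contra! h
    nlinarith

lemma exists_val_two_mul_sub_div [NeZero b] [NeZero n] {x y : ZMod n}
    (h : IsBlockInterior b (2 * x - y)) :
    ∃ m : ℤ, (((2 * x - y).val / (n / b) : ℕ) : ℤ) =
      2 * (x.val / (n / b) : ℕ) - (y.val / (n / b) : ℕ) +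
        carry (n / b) (offset b x) (offset b y) + b * m := by
  have hb := Nat.pos_of_neZero b
  have hL : 0 < n / b := hb.trans_le ((Nat.le_add_left _ _).trans h.2)
  obtain ⟨m, hm, hval⟩ := exists_val_two_mul_sub x y
  refine ⟨m, ?_⟩
  have hω := Int.emod_nonneg (2 * offset b x - offset b y) (b := (n / b : ℕ)) (by omega)
  have hω' := Int.emod_lt_of_pos (2 * offset b x - offset b y) (b := (n / b : ℕ)) (by omega)
  have hwrap : -(b : ℤ) < (n % b : ℕ) * m ∧ (n % b : ℕ) * m < b := by
    have ht : n % b < b := Nat.mod_lt n hb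
    rw [Finset.mem_Icc] at hm
    obtain rfl | rfl | rfl : m = -1 ∨ m = 0 ∨ m = 1 := by omega
    all_goals omega
  rw [Int.natCast_ediv]
  refine ediv_eq_of_emod_interior (b := b)
    (w := (2 * offset b x - offset b y) % (n / b : ℕ) + (n % b : ℕ) * m) ?_ ?_ ?_ ?_ ?_
  · rw [hval, carry]
    have hx : ((n / b * (x.val / (n / b)) + offset b x : ℕ) : ℤ) = x.val :=
      congrArg _ (Nat.div_add_mod x.val (n / b))
    have hy : ((n / b * (y.val / (n / b)) + offset b y : ℕ) : ℤ) = y.val :=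
      congrArg _ (Nat.div_add_mod y.val (n / b))
    have hn : ((b * (n / b) + n % b : ℕ) : ℤ) = n := congrArg _ (Nat.div_add_mod n b)
    have hcarry := Int.mul_ediv_add_emod (2 * offset b x - offset b y) (n / b : ℕ)
    simp only [Nat.cast_add, Nat.cast_mul] at hx hy hn
    linear_combination -hcarry - 2 * hx + hy - m * hn
  · linarith
  · linarith
  · exact_mod_cast h.1
  · exact_mod_cast h.2

lemma block_two_mul_sub [NeZero b] [NeZero n] {x y : ZMod n} (h : IsBlockInterior b (2 * x - y)) :
    block b (2 * x - y) =
      2 * block b x - block b y + carry (n / b) (offset b x) (offset b y) := by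
  obtain ⟨m, hm⟩ := exists_val_two_mul_sub_div h
  simpa only [block, Int.cast_add, Int.cast_sub, Int.cast_mul, Int.cast_natCast, Int.cast_ofNat,
    CharP.cast_eq_zero, zero_mul, add_zero] using congrArg (Int.cast : ℤ → ZMod b) hm

/-- The coloring of `Z_n` whose block `i` has the color `f i`. -/
def blockColoring (f : ZMod b → Fin 2) (x : ZMod n) : Fin 2 := f (block b x)

/-- The pairs of blocks of the middle terms of a 4-AP that is monochromatic under a block coloring
with pattern `f`, when `j` and `k` are the carries of its first and its last term. -/
def monoBlockPairs [NeZero b] (f : ZMod b → Fin 2) (j k : ℤ) : Finset (ZMod b × ZMod b) :=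
  Finset.univ.filter fun q =>
    f (2 * q.1 - q.2 + j) = f q.1 ∧ f q.2 = f q.1 ∧ f (2 * q.2 - q.1 + k) = f q.1

lemma val_div_lt_two_mul [NeZero b] [NeZero n] (hbn : b ≤ n) (x : ZMod n) :
    x.val / (n / b) < 2 * b := by
  have hb := Nat.pos_of_neZero b
  have hL : 0 < n / b := Nat.div_pos hbn hb
  rw [Nat.div_lt_iff_lt_mul hL]
  nlinarith [x.val_lt, Nat.div_add_mod' n b, Nat.mod_lt n hb]

open scoped Classical in
lemma card_filter_not_isBlockInterior_le [NeZero b] [NeZero n] (hbn : b ≤ n) :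
    (Finset.univ.filter fun x : ZMod n => ¬ IsBlockInterior b x).card ≤ 4 * b ^ 2 := by
  have hb := Nat.pos_of_neZero b
  have hL : 0 < n / b := Nat.div_pos hbn hb
  have hoffsets : (Finset.range b ∪ Finset.Ico (n / b - b) (n / b)).card ≤ 2 * b := by
    refine (Finset.card_union_le _ _).trans ?_
    rw [Finset.card_range, Nat.card_Ico]
    omega
  calc (Finset.univ.filter fun x : ZMod n => ¬ IsBlockInterior b x).card
      ≤ (Finset.range (2 * b) ×ˢ (Finset.range b ∪ Finset.Ico (n / b - b) (n / b))).card := by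
        refine Finset.card_le_card_of_injOn (fun x => (x.val / (n / b), offset b x)) ?_ ?_
        · intro x hx
          have hdiv := val_div_lt_two_mul hbn x
          have hoff : offset b x < n / b := Nat.mod_lt _ hL
          have hx : ¬ IsBlockInterior b x := (Finset.mem_filter.1 hx).2
          rw [IsBlockInterior] at hx
          simp only [Finset.coe_product, Set.mem_prod, Finset.mem_coe, Finset.mem_range,
            Finset.mem_union, Finset.mem_Ico]
          omega
        · intro x _ y _ h
          obtain ⟨hdiv, hoff⟩ := Prod.mk.inj h
          exact eq_of_val_div_eq_of_offset_eq hdiv hoff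
    _ ≤ 2 * b * (2 * b) := by
        rw [Finset.card_product, Finset.card_range]
        exact Nat.mul_le_mul_left _ hoffsets
    _ = 4 * b ^ 2 := by ring

open scoped Classical in
lemma card_exists_not_isBlockInterior_le [NeZero b] [NeZero n] (hbn : b ≤ n) (k : ℕ) :
    (Finset.univ.filter fun p : ZMod n × ZMod n =>
      ∃ i < k, ¬ IsBlockInterior b (p.1 + i • p.2)).card ≤ k * (4 * b ^ 2 * n) := by
  have hterm (i : ℕ) : (Finset.univ.filter fun p : ZMod n × ZMod n =>
      ¬ IsBlockInterior b (p.1 + i • p.2)).card ≤ 4 * b ^ 2 * n := by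
    calc _ ≤ ((Finset.univ.filter fun x : ZMod n => ¬ IsBlockInterior b x) ×ˢ
            (Finset.univ : Finset (ZMod n))).card := by
          refine Finset.card_le_card_of_injOn (fun p => (p.1 + i • p.2, p.2)) ?_ ?_
          · intro p hp
            simpa using hp
          · rintro ⟨a, d⟩ - ⟨a', d'⟩ - h
            obtain ⟨hsum, hd⟩ := Prod.mk.inj h
            obtain rfl : d = d' := hd
            exact congrArg (·, d) (add_right_cancel hsum)
      _ ≤ 4 * b ^ 2 * n := by
          rw [Finset.card_product, Finset.card_univ, ZMod.card]
          exact Nat.mul_le_mul_right _ (card_filter_not_isBlockInterior_le hbn)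
  calc _ ≤ ((Finset.range k).biUnion fun i => Finset.univ.filter fun p : ZMod n × ZMod n =>
          ¬ IsBlockInterior b (p.1 + i • p.2)).card := by
        refine Finset.card_le_card fun p hp => ?_
        simpa using hp
    _ ≤ (Finset.range k).card * (4 * b ^ 2 * n) :=
        Finset.card_biUnion_le_card_mul _ _ _ fun i _ => hterm i
    _ = k * (4 * b ^ 2 * n) := by rw [Finset.card_range]

open scoped Classical in
/-- The monochromatic `k`-APs `(a, d)` under `c` with all terms in the interior of their blocks,
so that the carries of a 4-AP determine the blocks of its outer terms. -/
noncomputable def interiorMonoAPs [NeZero n] (b k : ℕ) (c : ZMod n → Fin 2) :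
    Finset (ZMod n × ZMod n) :=
  Finset.univ.filter fun p =>
    (∀ i < k, c (p.1 + i • p.2) = c p.1) ∧ ∀ i < k, IsBlockInterior b (p.1 + i • p.2)

lemma mem_interiorMonoAPs [NeZero n] {k : ℕ} {c : ZMod n → Fin 2} {p : ZMod n × ZMod n} :
    p ∈ interiorMonoAPs b k c ↔
      (∀ i < k, c (p.1 + i • p.2) = c p.1) ∧ ∀ i < k, IsBlockInterior b (p.1 + i • p.2) := by
  simp [interiorMonoAPs]

lemma monoAPCount_le_card_interiorMonoAPs_add [NeZero b] [NeZero n] (hbn : b ≤ n) (k : ℕ)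
    (c : ZMod n → Fin 2) :
    monoAPCount n k c ≤ (interiorMonoAPs b k c).card + k * (4 * b ^ 2 * n) := by
  classical
  refine le_trans ?_ (Nat.add_le_add_left (card_exists_not_isBlockInterior_le hbn k) _)
  rw [monoAPCount, Set.ncard_eq_toFinset_card']
  refine (Finset.card_le_card fun p hp => ?_).trans (Finset.card_union_le _ _)
  rw [Set.mem_toFinset] at hp
  by_cases hint : ∀ i < k, IsBlockInterior b (p.1 + i • p.2)
  · exact Finset.mem_union_left _ (mem_interiorMonoAPs.2 ⟨hp, hint⟩)
  · push Not at hint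
    exact Finset.mem_union_right _ (Finset.mem_filter.2 ⟨Finset.mem_univ _, hint⟩)

lemma mem_monoBlockPairs_of_mem_interiorMonoAPs [NeZero b] [NeZero n] {f : ZMod b → Fin 2}
    {a d : ZMod n} (h : (a, d) ∈ interiorMonoAPs b 4 (blockColoring f)) :
    (block b (a + d), block b (a + 2 • d)) ∈ monoBlockPairs f
      (carry (n / b) (offset b (a + d)) (offset b (a + 2 • d)))
      (carry (n / b) (offset b (a + 2 • d)) (offset b (a + d))) := by
  obtain ⟨hmono, hint⟩ := mem_interiorMonoAPs.1 h
  have hfirst : 2 * (a + d) - (a + 2 • d) = a + 0 • d := by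
    simp only [nsmul_eq_mul]
    push_cast
    ring
  have hlast : 2 * (a + 2 • d) - (a + d) = a + 3 • d := by
    simp only [nsmul_eq_mul]
    push_cast
    ring
  have hsecond := hmono 1 (by norm_num)
  rw [one_smul] at hsecond
  simp only [monoBlockPairs, Finset.mem_filter, Finset.mem_univ, true_and]
  rw [← block_two_mul_sub (hfirst ▸ hint 0 (by norm_num)),
    ← block_two_mul_sub (hlast ▸ hint 3 (by norm_num)), hfirst, hlast]
  refine ⟨(hmono 0 (by norm_num)).trans hsecond.symm, ?_, ?_⟩
  · exact (hmono 2 (by norm_num)).trans hsecond.symm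
  · exact (hmono 3 (by norm_num)).trans hsecond.symm

lemma eq_of_mem_interiorMonoAPs_of_middle_eq [NeZero b] [NeZero n] {k : ℕ} (hk : 2 < k)
    {c : ZMod n → Fin 2} {a d a' d' : ZMod n} (h : (a, d) ∈ interiorMonoAPs b k c)
    (h' : (a', d') ∈ interiorMonoAPs b k c)
    (hblock₁ : block b (a + d) = block b (a' + d'))
    (hoffset₁ : offset b (a + d) = offset b (a' + d'))
    (hblock₂ : block b (a + 2 • d) = block b (a' + 2 • d'))
    (hoffset₂ : offset b (a + 2 • d) = offset b (a' + 2 • d')) : (a, d) = (a', d') := by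
  have hint := (mem_interiorMonoAPs.1 h).2
  have hint' := (mem_interiorMonoAPs.1 h').2
  have h₁ : a + d = a' + d' := by
    refine IsBlockInterior.ext (b := b) ?_ ?_ hblock₁ hoffset₁
    · simpa using hint 1 (by omega)
    · simpa using hint' 1 (by omega)
  have h₂ : a + 2 • d = a' + 2 • d' :=
    (hint 2 hk).ext (hint' 2 hk) hblock₂ hoffset₂
  obtain rfl : d = d' := by
    rw [two_smul, two_smul, ← add_assoc, ← add_assoc, h₁] at h₂
    exact add_left_cancel h₂
  rw [add_right_cancel h₁]

lemma card_interiorMonoAPs_blockColoring_le [NeZero b] [NeZero n] (hbn : b ≤ n)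
    (f : ZMod b → Fin 2) :
    (interiorMonoAPs (n := n) b 4 (blockColoring f)).card ≤
      ∑ q ∈ Finset.range (n / b) ×ˢ Finset.range (n / b),
        (monoBlockPairs f (carry (n / b) q.1 q.2) (carry (n / b) q.2 q.1)).card := by
  have hL : 0 < n / b := Nat.div_pos hbn (Nat.pos_of_neZero b)
  rw [Finset.card_eq_sum_card_fiberwise
    (f := fun p => (offset b (p.1 + p.2), offset b (p.1 + 2 • p.2)))
    (t := Finset.range (n / b) ×ˢ Finset.range (n / b))]
  · refine Finset.sum_le_sum fun q _ => Finset.card_le_card_of_injOn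
      (fun p => (block b (p.1 + p.2), block b (p.1 + 2 • p.2))) ?_ ?_
    · rintro p hpq
      obtain ⟨hp, rfl⟩ := Finset.mem_filter.1 hpq
      exact mem_monoBlockPairs_of_mem_interiorMonoAPs hp
    · intro p hpq p' hpq' hblock
      obtain ⟨hp, hq⟩ := Finset.mem_filter.1 hpq
      obtain ⟨hp', hq'⟩ := Finset.mem_filter.1 hpq'
      obtain ⟨hblock₁, hblock₂⟩ := Prod.mk.inj hblock
      obtain ⟨hoffset₁, hoffset₂⟩ := Prod.mk.inj (hq.trans hq'.symm)
      exact eq_of_mem_interiorMonoAPs_of_middle_eq (by norm_num) hp hp' hblock₁ hoffset₁ hblock₂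
        hoffset₂
  · intro p _
    simp [offset, Nat.mod_lt _ hL]

theorem three_mul_monoAPCount_blockColoring_le [NeZero b] [NeZero n] (hbn : b ≤ n)
    {f : ZMod b → Fin 2} {A : ℕ}
    (hA : ∀ j ∈ Finset.Icc (-1) 1, ∀ k ∈ Finset.Icc (-1) 1, (monoBlockPairs f j k).card ≤ A) :
    3 * monoAPCount n 4 (blockColoring f) ≤
      (2 * A + (monoBlockPairs f 0 0).card) * (n / b) ^ 2 + 2 * A * (n / b) +
        48 * b ^ 2 * n := by
  have hsplit := monoAPCount_le_card_interiorMonoAPs_add (b := b) hbn 4 (blockColoring f)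
  have hinterior := card_interiorMonoAPs_blockColoring_le hbn f
  have hsum := three_mul_sum_carry_le (L := n / b) hA
  linarith

theorem monoAPCount_blockColoring_le_of_large [NeZero b] {f : ZMod b → Fin 2} {A : ℕ}
    (hA : ∀ j ∈ Finset.Icc (-1) 1, ∀ k ∈ Finset.Icc (-1) 1, (monoBlockPairs f j k).card ≤ A)
    {ε : ℝ} (hε : 0 < ε) :
    ∃ N : ℕ, ∀ n : ℕ, N ≤ n → (monoAPCount n 4 (blockColoring f) : ℝ) ≤
      ((2 * A + (monoBlockPairs f 0 0).card) / (3 * b ^ 2) + ε) * (n : ℝ) ^ 2 := by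
  set B := (monoBlockPairs f 0 0).card
  obtain ⟨N, hN⟩ := exists_nat_ge ((2 * A + 48 * b ^ 2) / (3 * ε))
  refine ⟨max N b, fun n hn => ?_⟩
  obtain ⟨hNn, hbn⟩ := max_le_iff.1 hn
  have hb : (0 : ℝ) < b := by exact_mod_cast Nat.pos_of_neZero b
  have : NeZero n := ⟨by have := Nat.pos_of_neZero b; omega⟩
  have hcount : (3 * monoAPCount n 4 (blockColoring f) : ℝ) ≤
      (2 * A + B) * ((n / b : ℕ) : ℝ) ^ 2 + 2 * A * (n / b : ℕ) + 48 * b ^ 2 * n := by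
    exact_mod_cast three_mul_monoAPCount_blockColoring_le hbn hA
  have hL : ((n / b : ℕ) : ℝ) ≤ n / b := Nat.cast_div_le
  have hLn : ((n / b : ℕ) : ℝ) ≤ n := by exact_mod_cast Nat.div_le_self n b
  have herror : (2 * A + 48 * b ^ 2 : ℝ) ≤ 3 * ε * n := by
    rw [div_le_iff₀' (by positivity)] at hN
    exact hN.trans (by gcongr)
  suffices (3 * monoAPCount n 4 (blockColoring f) : ℝ) ≤
      3 * (((2 * A + B) / (3 * b ^ 2) + ε) * (n : ℝ) ^ 2) by linarith
  calc (3 * monoAPCount n 4 (blockColoring f) : ℝ)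
      ≤ (2 * A + B) * ((n / b : ℕ) : ℝ) ^ 2 + 2 * A * (n / b : ℕ) + 48 * b ^ 2 * n := hcount
    _ ≤ (2 * A + B) * ((n : ℝ) / b) ^ 2 + 2 * A * n + 48 * b ^ 2 * n := by gcongr
    _ = (2 * A + B) * ((n : ℝ) / b) ^ 2 + (2 * A + 48 * b ^ 2) * n := by ring
    _ ≤ (2 * A + B) * ((n : ℝ) / b) ^ 2 + 3 * ε * n * n := by gcongr
    _ = 3 * (((2 * A + B) / (3 * b ^ 2) + ε) * (n : ℝ) ^ 2) := by
        field_simp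

end Blocks

/-- A coloring of 20 consecutive blocks with few monochromatic 4-APs, found by local search. -/
def twentyBlockPattern : ZMod 20 → Fin 2 :=
  ![0, 1, 0, 0, 0, 1, 1, 1, 0, 1, 1, 0, 1, 1, 1, 0, 0, 0, 1, 0]

lemma card_monoBlockPairs_twentyBlockPattern_zero :
    (monoBlockPairs twentyBlockPattern 0 0).card = 36 := by
  decide +kernel

lemma card_monoBlockPairs_twentyBlockPattern_le :
    ∀ j ∈ Finset.Icc (-1) 1, ∀ k ∈ Finset.Icc (-1) 1,
      (monoBlockPairs twentyBlockPattern j k).card ≤ 50 := by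
  decide +kernel

theorem m4_upper_bound_even_general :
    ∀ ε : ℝ, 0 < ε → ∃ N : ℕ, ∀ n : ℕ, N ≤ n →
      ∃ c : ZMod n → Fin 2, (monoAPCount n 4 c : ℝ) ≤ (17 / 150 + ε) * (n : ℝ) ^ 2 := by
  intro ε hε
  obtain ⟨N, hN⟩ :=
    monoAPCount_blockColoring_le_of_large card_monoBlockPairs_twentyBlockPattern_le hε
  refine ⟨N, fun n hn => ⟨blockColoring twentyBlockPattern, (hN n hn).trans_eq ?_⟩⟩
  norm_num [card_monoBlockPairs_twentyBlockPattern_zero]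

theorem m4_upper_bound_even :
    ∀ ε : ℝ, 0 < ε → ∃ N : ℕ, ∀ n : ℕ, N ≤ n → Even n →
      ∃ c : ZMod n → Fin 2, (monoAPCount n 4 c : ℝ) ≤ (8543 / 72600 + ε) * (n : ℝ) ^ 2 := by
  intro ε hε
  obtain ⟨N, hN⟩ := m4_upper_bound_even_general ε hε
  refine ⟨N, fun n hn _ => (hN n hn).imp fun c hc => hc.trans ?_⟩
  have hdensity : (17 / 150 : ℝ) ≤ 8543 / 72600 := by norm_num
  gcongr
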